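/- Let σ : Σ → Σ be a topologically transitive one-sided countable state Markov shift, let G be a countable group, let ψ : Σ → G depend only on the first coordinate, and suppose T_ψ̄ : Σ×Ḡ → Σ×Ḡ is topologically transitive. Let φ : Σ → ℝ be locally Hölder continuous. Then for every w ∈ ℝ^d, P_G(φ + ⟨w, ψ̄⟩, T_ψ̄) = P_G(φ, T_ψ̄), where ⟨·,·⟩ is the standard inner product on ℝ^d and Ḡ is identified with ℤ^d. -/

import Mathlib

/-! Every point `x` of the skew product with `T^n x = x` returns to its initial `ℤ^d`-coordinate.
The displacement function `⟨w, ψ̄⟩` is the coboundary of `(x, m) ↦ ⟨w, m⟩`, so its Birkhoff sum over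
one period telescopes to `0`. Hence the two weighted periodic-point sums agree term by term for
every `n`, and so do the pressures. -/

open scoped ENNReal NNReal BigOperators
open Filter

namespace Gurevic

/-! ## Countable state Markov shifts -/

/-- The space of a one-sided countable state Markov shift with state set `S`
and transition matrix `A`. -/
def Space {S : Type*} (A : S → S → Prop) : Type _ :=
  {x : ℕ → S // ∀ n : ℕ, A (x n) (x (n + 1))}

/-- The shift map of a countable state Markov shift. -/
def shift {S : Type*} (A : S → S → Prop) : Space A → Space A :=
  fun x => ⟨fun n => x.1 (n + 1), fun n => x.2 (n + 1)⟩

/-- The cylinder set determined by a word `w`. -/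
def Cyl {S : Type*} (A : S → S → Prop) (w : List S) : Set (Space A) :=
  {x | ∀ (i : ℕ) (h : i < w.length), x.1 i = w[i]}

/-- The cylinder set determined by a single state `a`. -/
def CylS {S : Type*} (A : S → S → Prop) (a : S) : Set (Space A) :=
  {x | x.1 0 = a}

/-- A word is allowed if all its transitions are allowed. -/
def Allowed {S : Type*} (A : S → S → Prop) (w : List S) : Prop :=
  List.Chain' A w

/-- Topological transitivity: some orbit is dense (it visits every nonempty
cylinder; cylinders form a basis for the topology). -/
def TopTransitive {S : Type*} (A : S → S → Prop) : Prop :=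
  ∃ x : Space A, ∀ w : List S, (Cyl A w).Nonempty → ∃ n : ℕ, (shift A)^[n] x ∈ Cyl A w

/-- Topological mixing: for all states `a, b` there is `N` such that for every
`n ≥ N` there is a word `w` of length `n` with `awb` allowed. -/
def TopMixing {S : Type*} (A : S → S → Prop) : Prop :=
  ∀ a b : S, ∃ N : ℕ, ∀ n : ℕ, N ≤ n →
    ∃ w : List S, w.length = n ∧ List.Chain' A (a :: (w ++ [b]))

/-- The big images and preimages (BIP) property. -/
def BIP {S : Type*} (A : S → S → Prop) : Prop :=
  ∃ B : Finset S, ∀ a : S, (∃ b ∈ B, A b a) ∧ (∃ b ∈ B, A a b)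

/-- Birkhoff sum `φ^n = φ + φ∘σ + ⋯ + φ∘σ^{n-1}`. -/
def birk {S : Type*} (A : S → S → Prop) (φ : Space A → ℝ) (n : ℕ) (x : Space A) : ℝ :=
  ∑ j ∈ Finset.range n, φ ((shift A)^[j] x)

/-- Local Hölder continuity of a potential. -/
def LocHolder {S : Type*} (A : S → S → Prop) (φ : Space A → ℝ) : Prop :=
  ∃ C : ℝ, 0 < C ∧ ∃ θ : ℝ, 0 < θ ∧ θ < 1 ∧
    ∀ n : ℕ, 1 ≤ n → ∀ w : List S, w.length = n → Allowed A w →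
      ∀ x ∈ Cyl A w, ∀ y ∈ Cyl A w, |φ x - φ y| ≤ C * θ ^ n

/-- The sum over periodic points of period `n` starting at state `a`,
weighted by `e^{φ^n}`. -/
noncomputable def Zper {S : Type*} (A : S → S → Prop) (φ : Space A → ℝ) (a : S) (n : ℕ) :
    ℝ≥0∞ :=
  ∑' x : {x : Space A // (shift A)^[n] x = x ∧ x.1 0 = a},
    ENNReal.ofReal (Real.exp (birk A φ n x.1))

/-- The Gurevič pressure of `φ` (with base state `a`):
`limsup (1/n) log Σ_{σ^n x = x, x ∈ [a]} e^{φ^n(x)}`. -/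
noncomputable def gurevic {S : Type*} (A : S → S → Prop) (φ : Space A → ℝ) (a : S) : EReal :=
  Filter.atTop.limsup fun n : ℕ =>
    (((n : ℝ)⁻¹ : ℝ) : EReal) * ENNReal.log (Zper A φ a n)

/-- Summability of a potential: `sup_x Σ_{σy = x} e^{φ(y)} < ∞`. -/
def SummablePot {S : Type*} (A : S → S → Prop) (φ : Space A → ℝ) : Prop :=
  ∃ C : ℝ, ∀ x : Space A,
    (∑' y : {y : Space A // shift A y = x}, ENNReal.ofReal (Real.exp (φ y.1))) ≤
      ENNReal.ofReal C

/-! ## Skew product extensions -/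

/-- The transition matrix of the skew product extension `T_ψ` on states `S × G`. -/
def skewA {S G : Type*} [Mul G] (A : S → S → Prop) (ψ : S → G) :
    (S × G) → (S × G) → Prop :=
  fun p q => A p.1 q.1 ∧ q.2 = p.2 * ψ p.1

/-- Projection from the skew product shift space to the base shift space. -/
def skewProj {S G : Type*} [Mul G] (A : S → S → Prop) (ψ : S → G) :
    Space (skewA A ψ) → Space A :=
  fun x => ⟨fun n => (x.1 n).1, fun n => (x.2 n).1⟩

/-- The cocycle `ψ_n(x) = ψ(x) ψ(σx) ⋯ ψ(σ^{n-1}x)` (recall `ψ(x)` depends only on `x_0`). -/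
def psiN {S G : Type*} [Monoid G] {A : S → S → Prop} (ψ : S → G) (n : ℕ) (x : Space A) : G :=
  ((List.range n).map fun j => ψ (x.1 j)).prod

/-- The Gurevič pressure of the skew product `T_ψ` with potential `(x,g) ↦ φ(x)`,
with base state `(a, g)`. -/
noncomputable def gurevicSkew {S G : Type*} [Mul G] (A : S → S → Prop) (ψ : S → G)
    (φ : Space A → ℝ) (a : S) (g : G) : EReal :=
  gurevic (skewA A ψ) (fun x => φ (skewProj A ψ x)) (a, g)

/-! ## Abelianization -/

/-- `π : G →* ℤ^d` realizes `ℤ^d` as the torsion-free part of the abelianization of `G`: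
it is surjective and its kernel consists of the elements `g` such that some positive
power of `g` lies in the commutator subgroup. -/
def IsTorsionFreeAbelianization {G : Type*} [Group G] (d : ℕ)
    (π : G →* Multiplicative (Fin d → ℤ)) : Prop :=
  Function.Surjective π ∧
    ∀ g : G, π g = 1 ↔ ∃ n : ℕ, 0 < n ∧ g ^ n ∈ commutator G

/-- `ψ̄ = π ∘ ψ`, viewed additively as a function to `ℤ^d`. -/
def psibar {S G : Type*} [Group G] {d : ℕ} (π : G →* Multiplicative (Fin d → ℤ))
    (ψ : S → G) : S → (Fin d → ℤ) :=
  fun s => Multiplicative.toAdd (π (ψ s))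

/-- Standard inner product `⟨w, v⟩` of `w ∈ ℝ^d` with an integer vector `v ∈ ℤ^d`. -/
def dotZ {d : ℕ} (w : Fin d → ℝ) (v : Fin d → ℤ) : ℝ :=
  ∑ i, w i * (v i : ℝ)

/-- Euclidean norm of an integer vector. -/
noncomputable def normZ {d : ℕ} (v : Fin d → ℤ) : ℝ :=
  Real.sqrt (∑ i, ((v i : ℝ)) ^ 2)

/-- Euclidean norm on `ℝ^d`. -/
noncomputable def normR {d : ℕ} (w : Fin d → ℝ) : ℝ :=
  Real.sqrt (∑ i, (w i) ^ 2)

/-- `δ(φ, f) = sup { r ≥ 0 : φ + r|f| is summable }`, valued in `[0,∞]`. -/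
noncomputable def deltaExp {S : Type*} (A : S → S → Prop) (φ : Space A → ℝ) {d : ℕ}
    (f : S → (Fin d → ℤ)) : ℝ≥0∞ :=
  ⨆ (r : ℝ≥0) (_ : SummablePot A fun x => φ x + (r : ℝ) * normZ (f (x.1 0))), (r : ℝ≥0∞)

/-! ## Amenability -/

/-- A bounded real-valued function. -/
def IsBddFn {G : Type*} (f : G → ℝ) : Prop := ∃ C : ℝ, ∀ g : G, |f g| ≤ C

/-- A right-invariant mean on `ℓ^∞(G)`: a positive normalized linear functional on the
bounded real-valued functions on `G` which is invariant under right translation. -/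
structure RightInvariantMean (G : Type*) [Group G] where
  M : (G → ℝ) → ℝ
  map_add : ∀ f₁ f₂ : G → ℝ, IsBddFn f₁ → IsBddFn f₂ → M (f₁ + f₂) = M f₁ + M f₂
  map_smul : ∀ (c : ℝ) (f : G → ℝ), IsBddFn f → M (c • f) = c * M f
  map_one : M (fun _ => (1 : ℝ)) = 1
  nonneg : ∀ f : G → ℝ, IsBddFn f → (∀ g : G, 0 ≤ f g) → 0 ≤ M f
  right_invariant : ∀ f : G → ℝ, IsBddFn f → ∀ γ : G, M (fun g => f (g * γ)) = M f

/-- A group is amenable if it admits a right-invariant mean on `ℓ^∞(G)`. -/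
def Amenable (G : Type*) [Group G] : Prop := Nonempty (RightInvariantMean G)

/-! ## Transfer operators for skew products -/

/-- `(𝓛_φ^n 1_{[a]×{e}})(o, g) = Σ { e^{φ^n(y)} : σ^n y = o, y ∈ [a], ψ_n(y) = g }`. -/
noncomputable def transferInd {S G : Type*} [Monoid G] (A : S → S → Prop)
    (φ : Space A → ℝ) (ψ : S → G) (a : S) (n : ℕ) (o : Space A) (g : G) : ℝ≥0∞ :=
  ∑' y : {y : Space A // (shift A)^[n] y = o ∧ y.1 0 = a ∧ psiN ψ n y = g},
    ENNReal.ofReal (Real.exp (birk A φ n y.1))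

/-- `(𝓛_φ^n v)(z, g) = Σ_{σ^n y = z} e^{φ^n(y)} v(y, g ψ_n(y)⁻¹)`. -/
noncomputable def transferOp {S G : Type*} [Group G] (A : S → S → Prop)
    (φ : Space A → ℝ) (ψ : S → G) (n : ℕ) (v : Space A → G → ℝ≥0∞)
    (z : Space A) (g : G) : ℝ≥0∞ :=
  ∑' y : {y : Space A // (shift A)^[n] y = z},
    ENNReal.ofReal (Real.exp (birk A φ n y.1)) * v y.1 (g * (psiN ψ n y.1)⁻¹)

/-- The series `ζ_{o,g}(t) = Σ_{n ≥ 1} t^{-n} c_n^{-1} (𝓛_φ^n 1_{[a]×{e}})(o, g)`. -/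
noncomputable def zeta {S G : Type*} [Monoid G] (A : S → S → Prop) (φ : Space A → ℝ)
    (ψ : S → G) (a : S) (c : ℕ → ℝ) (t : ℝ) (o : Space A) (g : G) : ℝ≥0∞ :=
  ∑' n : ℕ, ENNReal.ofReal ((t ^ (n + 1))⁻¹ * (c (n + 1))⁻¹) *
    transferInd A φ ψ a (n + 1) o g

/-- The set `Z` of all preimages of a point `o`. -/
def preOrbit {S : Type*} (A : S → S → Prop) (o : Space A) : Set (Space A) :=
  {z | ∃ n : ℕ, (shift A)^[n] z = o}

/-! ## Topology, measures, Gibbs measures -/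

instance instTopSpace {S : Type*} (A : S → S → Prop) : TopologicalSpace (Space A) :=
  TopologicalSpace.induced (fun x => x.1)
    (@Pi.topologicalSpace ℕ (fun _ => S) (fun _ => ⊥))

instance instMeasSpace {S : Type*} (A : S → S → Prop) : MeasurableSpace (Space A) :=
  borel (Space A)

/-- A Gibbs measure for the potential `Φ`: a shift-invariant Borel probability measure
with the Gibbs property. -/
def IsGibbs {S : Type*} (A : S → S → Prop) (Φ : Space A → ℝ)
    (μ : MeasureTheory.Measure (Space A)) : Prop :=
  MeasureTheory.IsProbabilityMeasure μ ∧
  (∀ s : Set (Space A), MeasurableSet s → μ (shift A ⁻¹' s) = μ s) ∧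
  ∃ A' B' : ℝ, 0 < A' ∧ 0 < B' ∧ ∃ P : ℝ,
    ∀ n : ℕ, 1 ≤ n → ∀ w : List S, w.length = n → Allowed A w →
      ∀ x ∈ Cyl A w,
        ENNReal.ofReal (A' * Real.exp (birk A Φ n x - n * P)) ≤ μ (Cyl A w) ∧
        μ (Cyl A w) ≤ ENNReal.ofReal (B' * Real.exp (birk A Φ n x - n * P))

/-! ## Periodic orbit sums for the equidistribution results -/

/-- `Λ^ψ(n) = {x : σ^n x = x, ψ_n(x) = e}`. -/
def LambdaPer {S G : Type*} [Monoid G] (A : S → S → Prop) (ψ : S → G) (n : ℕ) :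
    Set (Space A) :=
  {x | (shift A)^[n] x = x ∧ psiN ψ n x = 1}

/-- `Λ^ψ(n, o) = {x : σ^n x = o, ψ_n(x) = e}`. -/
def LambdaPre {S G : Type*} [Monoid G] (A : S → S → Prop) (ψ : S → G) (n : ℕ)
    (o : Space A) : Set (Space A) :=
  {x | (shift A)^[n] x = o ∧ psiN ψ n x = 1}

/-- `Π_φ(Λ) = Σ_{x ∈ Λ} e^{φ^n(x)}`, valued in `[0,∞]`. -/
noncomputable def PiSum {S : Type*} (A : S → S → Prop) (φ : Space A → ℝ) (n : ℕ)
    (Λ : Set (Space A)) : ℝ≥0∞ :=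
  ∑' x : Λ, ENNReal.ofReal (Real.exp (birk A φ n x.1))

/-- `∫ g d𝔐_φ(Λ_n)` where `𝔐_φ(Λ_n) = Π_φ(Λ_n)⁻¹ Σ_{x ∈ Λ_n} e^{φ^n(x)} τ_{x,n}`,
using `∫ g dτ_{x,n} = (1/n) g^n(x)`. -/
noncomputable def MVal {S : Type*} (A : S → S → Prop) (φ : Space A → ℝ) (n : ℕ)
    (Λ : Set (Space A)) (g : Space A → ℝ) : ℝ :=
  (∑' x : Λ, Real.exp (birk A φ n x.1) * (birk A g n x.1 / n)) /
    (∑' x : Λ, Real.exp (birk A φ n x.1))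

/-- The sum over all periodic points `x` of period `n` with `ψ_n(x) = e`,
weighted by `e^{φ^n}`. -/
noncomputable def ZperAll {S G : Type*} [Monoid G] (A : S → S → Prop) (φ : Space A → ℝ)
    (ψ : S → G) (n : ℕ) : ℝ≥0∞ :=
  ∑' x : {x : Space A // (shift A)^[n] x = x ∧ psiN ψ n x = 1},
    ENNReal.ofReal (Real.exp (birk A φ n x.1))


lemma shift_iterate_apply {S : Type*} (A : S → S → Prop) (n : ℕ) (x : Space A) (k : ℕ) :
    ((shift A)^[n] x).1 k = x.1 (k + n) := by
  induction n generalizing x with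
  | zero => rfl
  | succ n ih =>
    rw [Function.iterate_succ_apply, ih]
    change x.1 (k + n + 1) = _
    rw [Nat.add_assoc]

lemma dotZ_add {d : ℕ} (w : Fin d → ℝ) (u v : Fin d → ℤ) :
    dotZ w (u + v) = dotZ w u + dotZ w v := by
  simp [dotZ, mul_add, Finset.sum_add_distrib]

/-- The Birkhoff sum of the displacement `⟨w, ψ̄⟩` telescopes. -/
lemma sum_dotZ_psibar {S G : Type*} [Group G] (A : S → S → Prop) (ψ : S → G)
    {d : ℕ} (π : G →* Multiplicative (Fin d → ℤ)) (w : Fin d → ℝ)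
    (x : Space (skewA A (fun s => π (ψ s)))) (n : ℕ) :
    ∑ j ∈ Finset.range n, dotZ w (psibar π ψ (x.1 j).1) =
      dotZ w (Multiplicative.toAdd (x.1 n).2) - dotZ w (Multiplicative.toAdd (x.1 0).2) := by
  rw [← Finset.sum_range_sub (fun j => dotZ w (Multiplicative.toAdd (x.1 j).2))]
  refine Finset.sum_congr rfl fun j _ => ?_
  rw [(x.2 j).2, toAdd_mul, dotZ_add]
  simp [psibar]

/-- for every `w ∈ ℝ^d`, `P_G(φ + ⟨w, ψ̄⟩, T_ψ̄) = P_G(φ, T_ψ̄)`. -/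
theorem statement_1 {S G : Type*} [Countable S] [Group G] [Countable G]
    (A : S → S → Prop) (φ : Space A → ℝ) (ψ : S → G)
    (d : ℕ) (π : G →* Multiplicative (Fin d → ℤ))
    (hπ : IsTorsionFreeAbelianization d π)
    (hσ : TopTransitive A)
    (hT : TopTransitive (skewA A (fun s => π (ψ s))))
    (hφ : LocHolder A φ) :
    ∀ (w : Fin d → ℝ) (a : S),
      gurevic (skewA A (fun s => π (ψ s)))
          (fun x => φ (skewProj A (fun s => π (ψ s)) x) + dotZ w (psibar π ψ ((x.1 0).1)))
          (a, 1) =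
        gurevicSkew A (fun s => π (ψ s)) φ a 1 := by
  intro w a
  unfold gurevicSkew gurevic Zper
  congr 1
  funext n
  congr 2
  refine tsum_congr fun x => ?_
  congr 2
  obtain ⟨x, hx, -⟩ := x
  have hper : x.1 n = x.1 0 := by
    have h := shift_iterate_apply _ n x 0
    rw [hx, Nat.zero_add] at h
    exact h.symm
  simp only [birk, Finset.sum_add_distrib, shift_iterate_apply, Nat.zero_add]
  rw [sum_dotZ_psibar, hper, sub_self, add_zero]

end Gurevic
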